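/- arXiv:0708.2082 — 2 statements merged into one kernel-verified Lean document; each statement's English description precedes it below -/
import Mathlib

section
/- Let f=(m,n,k) and g=(m',n',k') be integer binary quadratic forms with the same discriminant Δ>0 not a perfect square, and suppose f and g are SL(2,ℤ)-equivalent. Then the period of the continued fraction expansion of ξ⁺(f) equals the period of the continued fraction expansion of ξ⁺(g) up to cyclic permutation, and likewise the periods of the expansions of ξ⁻(f) and ξ⁻(g) coincide up to cyclic permutation. -/
/-- Iterates of the Gauss map starting from `ξ`. -/
noncomputable def gaussIter (ξ : ℝ) : ℕ → ℝ
  | 0 => ξ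
  | n + 1 => 1 / (gaussIter ξ n - (⌊gaussIter ξ n⌋ : ℝ))

/-- The `n`-th partial quotient of the regular continued fraction expansion of `ξ`. -/
noncomputable def cfTerm (ξ : ℝ) (n : ℕ) : ℤ := ⌊gaussIter ξ n⌋

/-- The continued fraction expansion of `ξ` is periodic with period length `P` from index `N`. -/
def IsEventuallyPeriodicCF (ξ : ℝ) (N P : ℕ) : Prop :=
  1 ≤ P ∧ ∀ j : ℕ, cfTerm ξ (N + j + P) = cfTerm ξ (N + j)

/-- `s` is the (minimal) period of the eventually periodic regular continued fraction
expansion of `ξ`; it is well defined up to cyclic permutation. -/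
def IsCFPeriod (s : List ℤ) (ξ : ℝ) : Prop :=
  s ≠ [] ∧
  (∃ N : ℕ, ∀ j : ℕ, cfTerm ξ (N + j) = s.getD (j % s.length) 0) ∧
  (∀ P : ℕ, 1 ≤ P → (∃ N : ℕ, IsEventuallyPeriodicCF ξ N P) → s.length ≤ P)

/-- The value of the binary quadratic form `f = (m, n, k)`, i.e. `m*x^2 + n*y^2 + k*x*y`. -/
def qval (f : ℤ × ℤ × ℤ) (x y : ℤ) : ℤ := f.1 * x ^ 2 + f.2.1 * y ^ 2 + f.2.2 * x * y

/-- The discriminant `k^2 - 4*m*n` of the form `f = (m, n, k)`. -/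
def formDisc (f : ℤ × ℤ × ℤ) : ℤ := f.2.2 ^ 2 - 4 * f.1 * f.2.1

/-- `SL(2,ℤ)`-equivalence of binary quadratic forms. -/
def SLEquiv (f g : ℤ × ℤ × ℤ) : Prop :=
  ∃ a b c d : ℤ, a * d - b * c = 1 ∧
    ∀ x y : ℤ, qval g x y = qval f (a * x + b * y) (c * x + d * y)

/-- The root with the plus sign of `m*ξ^2 + k*ξ + n = 0`, for `f = (m, n, k)`. -/
noncomputable def xiPlus (f : ℤ × ℤ × ℤ) : ℝ :=
  (-(f.2.2 : ℝ) + Real.sqrt ((formDisc f : ℤ) : ℝ)) / (2 * (f.1 : ℝ))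

/-- The root with the minus sign of `m*ξ^2 + k*ξ + n = 0`, for `f = (m, n, k)`. -/
noncomputable def xiMinus (f : ℤ × ℤ × ℤ) : ℝ :=
  (-(f.2.2 : ℝ) - Real.sqrt ((formDisc f : ℤ) : ℝ)) / (2 * (f.1 : ℝ))

/-- The conjugate `(m, n, -k)` of the form `(m, n, k)`. -/
def conjF (f : ℤ × ℤ × ℤ) : ℤ × ℤ × ℤ := (f.1, f.2.1, -f.2.2)

/-- The adjoint `(-n, -m, k)` of the form `(m, n, k)`. -/
def adjF (f : ℤ × ℤ × ℤ) : ℤ × ℤ × ℤ := (-f.2.1, -f.1, f.2.2)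

/-- The antipodal `(-n, -m, -k)` of the form `(m, n, k)`. -/
def antipF (f : ℤ × ℤ × ℤ) : ℤ × ℤ × ℤ := (-f.2.1, -f.1, -f.2.2)

/-- A form `(m, n, k)` is primitive if `gcd(m, n, k) = 1`. -/
def IsPrimitiveForm (f : ℤ × ℤ × ℤ) : Prop := Int.gcd f.1 (Int.gcd f.2.1 f.2.2) = 1

theorem gaussIter_shift (ξ : ℝ) (N j : ℕ) :
    gaussIter ξ (N + j) = gaussIter (gaussIter ξ N) j := by
  induction j with
  | zero => rfl
  | succ j ih => rw [← add_assoc]; simp only [gaussIter, ih]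

/-- Two reals have a common complete quotient. -/
def TailEq (ξ η : ℝ) : Prop := ∃ N M : ℕ, gaussIter ξ N = gaussIter η M

theorem TailEq.refl (ξ : ℝ) : TailEq ξ ξ := ⟨0, 0, rfl⟩

theorem TailEq.symm {ξ η : ℝ} (h : TailEq ξ η) : TailEq η ξ := by
  obtain ⟨N, M, h⟩ := h
  exact ⟨M, N, h.symm⟩

theorem TailEq.trans {ξ η ζ : ℝ} (h : TailEq ξ η) (h' : TailEq η ζ) : TailEq ξ ζ := by
  obtain ⟨N, M, h⟩ := h
  obtain ⟨M', L, h'⟩ := h'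
  refine ⟨N + M', L + M, ?_⟩
  rw [gaussIter_shift, h, ← gaussIter_shift, add_comm M M', gaussIter_shift, h', ← gaussIter_shift]

theorem tailEq_addInt (ξ : ℝ) (q : ℤ) : TailEq ξ (ξ + q) := by
  refine ⟨1, 1, ?_⟩
  simp [gaussIter]

theorem tailEq_inv_small {ξ : ℝ} (h0 : 0 < ξ) (h1 : ξ < 1) : TailEq ξ (1 / ξ) := by
  refine ⟨1, 0, ?_⟩
  have : ⌊ξ⌋ = 0 := Int.floor_eq_zero_iff.2 ⟨h0.le, h1⟩
  simp [gaussIter, this]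

theorem tailEq_one_sub {ξ : ℝ} (h0 : 0 < ξ) (h1 : ξ < 1 / 2) : TailEq ξ (1 - ξ) := by
  have e1 := tailEq_inv_small h0 (by linarith)
  have e2 := tailEq_addInt (1 / ξ) (-1)
  have hy : 2 < 1 / ξ := by
    rw [lt_div_iff₀ h0]; linarith
  have hz0 : 0 < 1 / (1 / ξ - 1) := by apply one_div_pos.2; linarith
  have hz1 : 1 / (1 / ξ - 1) < 1 := by
    rw [div_lt_one (by linarith)]; linarith
  have e3 := tailEq_inv_small hz0 hz1
  have e4 := tailEq_addInt (1 / (1 / ξ - 1)) 1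
  have e5 := tailEq_inv_small (ξ := 1 - ξ) (by linarith) (by linarith)
  rw [one_div_one_div] at e3
  have a1 : 1 / ξ + ((-1 : ℤ) : ℝ) = 1 / ξ - 1 := by push_cast; ring
  have a2 : 1 / (1 / ξ - 1) + ((1 : ℤ) : ℝ) = 1 / (1 - ξ) := by
    have : (1 : ℝ) - ξ ≠ 0 := by linarith
    have h' : ξ ≠ 0 := h0.ne'
    have h3 : 1 / ξ - 1 = (1 - ξ) / ξ := by field_simp
    rw [h3]; push_cast; field_simp; ring
  rw [a1] at e2
  rw [a2] at e4
  exact e1.trans (e2.trans (e3.symm.trans (e4.trans e5.symm)))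

theorem tailEq_neg {ξ : ℝ} (h : Irrational ξ) : TailEq ξ (-ξ) := by
  have hu : Irrational (Int.fract ξ) := by
    have := h.sub_intCast ⌊ξ⌋
    exact this
  have h0 : 0 < Int.fract ξ := lt_of_le_of_ne (Int.fract_nonneg ξ) (hu.ne_zero).symm
  have h1 : Int.fract ξ < 1 := Int.fract_lt_one ξ
  have h2 : Int.fract ξ ≠ 1 / 2 := by
    have := hu.ne_rat (1 / 2)
    push_cast at this
    exact this
  have e : TailEq (Int.fract ξ) (1 - Int.fract ξ) := by
    rcases lt_or_gt_of_ne h2 with h2 | h2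
    · exact tailEq_one_sub h0 h2
    · have := tailEq_one_sub (ξ := 1 - Int.fract ξ) (by linarith) (by linarith)
      rw [sub_sub_cancel] at this
      exact this.symm
  have e1 := tailEq_addInt (Int.fract ξ) ⌊ξ⌋
  have e2 := tailEq_addInt (1 - Int.fract ξ) (-1 - ⌊ξ⌋)
  have a1 : Int.fract ξ + (⌊ξ⌋ : ℝ) = ξ := Int.fract_add_floor ξ
  have a2 : 1 - Int.fract ξ + ((-1 - ⌊ξ⌋ : ℤ) : ℝ) = -ξ := by push_cast; linarith
  rw [a1] at e1
  rw [a2] at e2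
  exact e1.symm.trans (e.trans e2)

theorem tailEq_inv_pos {ξ : ℝ} (h : Irrational ξ) (h0 : 0 < ξ) : TailEq ξ (1 / ξ) := by
  rcases lt_or_gt_of_ne h.ne_one with h1 | h1
  · exact tailEq_inv_small h0 h1
  · have := tailEq_inv_small (ξ := 1 / ξ) (by positivity) (by rw [div_lt_one h0]; exact h1)
    rw [one_div_one_div] at this
    exact this.symm

theorem tailEq_inv {ξ : ℝ} (h : Irrational ξ) : TailEq ξ (1 / ξ) := by
  rcases lt_or_gt_of_ne h.ne_zero with h1 | h1
  · have e := tailEq_inv_pos h.neg (by linarith)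
    have hi : Irrational (1 / -ξ) := by rw [one_div]; exact h.neg.inv
    have e2 := tailEq_neg hi
    have a : -(1 / -ξ) = 1 / ξ := by rw [one_div_neg_eq_neg_one_div, neg_neg]
    rw [a] at e2
    exact (tailEq_neg h).trans (e.trans e2)
  · exact tailEq_inv_pos h h1

theorem lin_ne_zero {ξ : ℝ} (h : Irrational ξ) {c d : ℤ} (hcd : c ≠ 0 ∨ d ≠ 0) :
    (c : ℝ) * ξ + d ≠ 0 := by
  by_cases hc : c = 0
  · subst hc; simpa using hcd
  · exact ((h.intCast_mul hc).add_intCast d).ne_zero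

theorem moebius_irrational {ξ : ℝ} (h : Irrational ξ) {a b c d : ℤ}
    (hdet : a * d - b * c = 1 ∨ a * d - b * c = -1) :
    Irrational (((a : ℝ) * ξ + b) / ((c : ℝ) * ξ + d)) := by
  have hcd : c ≠ 0 ∨ d ≠ 0 := by
    by_contra! hh
    obtain ⟨rfl, rfl⟩ := hh
    simp at hdet
  have hne := lin_ne_zero h hcd
  rintro ⟨q, hq⟩
  rw [eq_div_iff hne] at hq
  have hd : (q.den : ℝ) ≠ 0 := by exact_mod_cast q.den_ne_zero
  have hqq : (q : ℝ) = (q.num : ℝ) / (q.den : ℝ) := by exact_mod_cast (Rat.num_div_den q).symm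
  rw [hqq] at hq
  have key : ((q.num * c - q.den * a : ℤ) : ℝ) * ξ + ((q.num * d - q.den * b : ℤ) : ℝ) = 0 := by
    field_simp at hq
    push_cast
    linarith
  refine lin_ne_zero h ?_ key
  by_contra! hh
  obtain ⟨h1, h2⟩ := hh
  have e1 : (q.den : ℤ) * (a * d - b * c) = 0 := by linear_combination c * h2 - d * h1
  have hd' : (q.den : ℤ) ≠ 0 := by exact_mod_cast q.den_ne_zero
  rcases hdet with h | h <;> rw [h] at e1 <;> omega

theorem serret_aux (n : ℕ) : ∀ {ξ : ℝ} (_ : Irrational ξ) (a b c d : ℤ), c.natAbs = n →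
    (a * d - b * c = 1 ∨ a * d - b * c = -1) →
    TailEq ξ (((a : ℝ) * ξ + b) / ((c : ℝ) * ξ + d)) := by
  induction n using Nat.strong_induction_on with
  | _ n ih =>
  intro ξ h a b c d hc hdet
  by_cases hc0 : c = 0
  · subst hc0
    have hdu : IsUnit d := by
      rcases hdet with h | h
      · exact IsUnit.of_mul_eq_one a (by linarith)
      · exact IsUnit.of_mul_eq_one (-a) (by linarith)
    have hau : IsUnit a := by
      rcases hdet with h | h
      · exact IsUnit.of_mul_eq_one d (by linarith)
      · exact IsUnit.of_mul_eq_one (-d) (by linarith)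
    rcases Int.isUnit_iff.1 hdu with rfl | rfl <;> rcases Int.isUnit_iff.1 hau with rfl | rfl
    · convert tailEq_addInt ξ b using 1; push_cast; ring
    · convert (tailEq_neg h).trans (tailEq_addInt (-ξ) b) using 1; push_cast; ring
    · convert (tailEq_neg h).trans (tailEq_addInt (-ξ) (-b)) using 1; push_cast; ring
    · convert tailEq_addInt ξ (-b) using 1; push_cast; ring
  · have hdm := Int.emod_add_mul_ediv a c
    set r := a % c with hr
    set q := a / c with hq
    have hrlt : r.natAbs < n := by
      have h1 := Int.emod_nonneg a hc0
      have h2 := Int.emod_lt_abs a hc0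
      rw [Int.abs_eq_natAbs] at h2
      omega
    have hdet' : c * (b - q * d) - d * r = 1 ∨ c * (b - q * d) - d * r = -1 := by
      rcases hdet with h | h
      · right; linear_combination -h - d * hdm
      · left; linear_combination -h - d * hdm
    have e := ih _ hrlt h c d r (b - q * d) rfl hdet'
    have e2 := tailEq_inv (moebius_irrational h hdet')
    have e3 := e.trans (e2.trans (tailEq_addInt _ q))
    convert e3 using 1
    have hne := lin_ne_zero h (c := c) (d := d) (Or.inl hc0)
    rw [one_div_div, div_add' _ _ _ hne]
    congr 1
    have : (a : ℝ) = r + c * q := by exact_mod_cast hdm.symm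
    rw [this]; push_cast; ring

theorem getD_mod_shift (s : List ℤ) {ξ : ℝ} {N : ℕ}
    (h : ∀ j : ℕ, cfTerm ξ (N + j) = s.getD (j % s.length) 0) (j : ℕ) :
    cfTerm ξ (N + j + s.length) = cfTerm ξ (N + j) := by
  rw [add_assoc, h, h, Nat.add_mod_right]

theorem TailEq.cfTerm_eq {ξ η : ℝ} (h : TailEq ξ η) :
    ∃ N M : ℕ, ∀ j, cfTerm ξ (N + j) = cfTerm η (M + j) := by
  obtain ⟨N, M, h⟩ := h
  exact ⟨N, M, fun j => by simp only [cfTerm, gaussIter_shift, h]⟩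

theorem TailEq.length_le {ξ η : ℝ} (h : TailEq ξ η) {s s' : List ℤ} (hs : IsCFPeriod s ξ)
    (hs' : IsCFPeriod s' η) : s'.length ≤ s.length := by
  obtain ⟨N, M, h⟩ := h.cfTerm_eq
  obtain ⟨h0, ⟨K, hK⟩, -⟩ := hs
  have hl : 1 ≤ s.length := List.length_pos_iff.2 h0
  refine hs'.2.2 _ hl ⟨M + K, hl, fun j => ?_⟩
  have e1 := getD_mod_shift s hK (N + j)
  have e2 := h (K + j)
  have e3 := h (K + j + s.length)
  have a1 : K + (N + j) + s.length = N + (K + j + s.length) := by ring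
  have a2 : K + (N + j) = N + (K + j) := by ring
  rw [a1, a2, e2, e3] at e1
  convert e1 using 2 <;> ring

theorem TailEq.isRotated {ξ η : ℝ} (h : TailEq ξ η) {s s' : List ℤ} (hs : IsCFPeriod s ξ)
    (hs' : IsCFPeriod s' η) : List.IsRotated s s' := by
  have hlen : s.length = s'.length := le_antisymm (h.symm.length_le hs' hs) (h.length_le hs hs')
  obtain ⟨N, M, h⟩ := h.cfTerm_eq
  obtain ⟨h0, ⟨K, hK⟩, -⟩ := hs
  obtain ⟨-, ⟨L, hL⟩, -⟩ := hs'
  have hl : 0 < s.length := List.length_pos_iff.2 h0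
  have key : s.rotate (N + L) = s'.rotate (M + K) := by
    apply List.ext_getElem
    · simp [hlen]
    · intro j h1 h2
      rw [List.getElem_rotate, List.getElem_rotate]
      have e1 := hK (j + (N + L))
      have e2 := hL (j + (M + K))
      have e3 := h (K + L + j)
      have a1 : K + (j + (N + L)) = N + (K + L + j) := by ring
      have a2 : L + (j + (M + K)) = M + (K + L + j) := by ring
      rw [a1, e3] at e1
      rw [a2, e1] at e2
      rwa [List.getD_eq_getElem _ _ (Nat.mod_lt _ hl),
        List.getD_eq_getElem _ _ (Nat.mod_lt _ (hlen ▸ hl))] at e2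
  have r1 : List.IsRotated s (s.rotate (N + L)) := ⟨_, rfl⟩
  have r2 : List.IsRotated s' (s'.rotate (M + K)) := ⟨_, rfl⟩
  rw [key] at r1
  exact r1.trans r2.symm

theorem root_tailEq (m n k m' n' k' a b c d : ℤ) (r : ℝ) (hr : Irrational r)
    (hr2 : r ^ 2 = (k : ℝ) ^ 2 - 4 * m * n) (hm : m ≠ 0) (hm' : m' ≠ 0)
    (hdet : a * d - b * c = 1)
    (e1 : m' = m * a ^ 2 + n * c ^ 2 + k * a * c)
    (e3 : k' = 2 * m * a * b + 2 * n * c * d + k * (a * d + b * c)) :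
    TailEq ((-(k : ℝ) + r) / (2 * m)) ((-(k' : ℝ) + r) / (2 * m')) := by
  have hmR : (m : ℝ) ≠ 0 := by exact_mod_cast hm
  have hmR' : (m' : ℝ) ≠ 0 := by exact_mod_cast hm'
  have hξ : Irrational ((-(k : ℝ) + r) / (2 * m)) := by
    have h1 : Irrational (-(k : ℝ) + r) := by
      have := hr.intCast_add (-k)
      push_cast at this
      exact this
    have := h1.div_intCast (m := 2 * m) (by omega)
    push_cast at this
    exact this
  have hdet' : d * a - (-b) * (-c) = 1 := by linarith
  have e := serret_aux _ hξ d (-b) (-c) a rfl (Or.inl hdet')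
  convert e using 1
  have hac : (-c) ≠ 0 ∨ a ≠ 0 := by
    by_contra! hh
    have : c = 0 := by omega
    rw [this, hh.2] at hdet
    simp at hdet
  have hne := lin_ne_zero hξ hac
  have hD : (a : ℝ) * d - b * c = 1 := by exact_mod_cast hdet
  have E1 : (m' : ℝ) = m * a ^ 2 + n * c ^ 2 + k * a * c := by exact_mod_cast e1
  have E3 : (k' : ℝ) = 2 * m * a * b + 2 * n * c * d + k * (a * d + b * c) := by exact_mod_cast e3
  rw [div_eq_div_iff (by positivity) hne]
  set x := (-(k : ℝ) + r) / (2 * m) with hx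
  have hrx : r = 2 * m * x + k := by rw [hx]; field_simp; ring
  have hq : m * x ^ 2 + k * x + n = 0 := by
    rw [hrx] at hr2
    have : 4 * (m : ℝ) * (m * x ^ 2 + k * x + n) = 0 := by linear_combination hr2
    rcases mul_eq_zero.1 this with h | h
    · exact absurd h (by simpa using hmR)
    · exact h
  rw [E1, E3, hrx]
  push_cast
  linear_combination -(2 * m * x + k) * (a - c * x) * hD - 2 * c * (a * d - b * c) * hq

theorem statement1 (m n k m' n' k' : ℤ)
    (hpos : 0 < formDisc (m, n, k)) (hsq : ¬ IsSquare (formDisc (m, n, k)))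
    (hdisc : formDisc (m, n, k) = formDisc (m', n', k'))
    (hequiv : SLEquiv (m, n, k) (m', n', k')) :
    (∀ s s' : List ℤ, IsCFPeriod s (xiPlus (m, n, k)) → IsCFPeriod s' (xiPlus (m', n', k')) →
      List.IsRotated s s') ∧
    (∀ t t' : List ℤ, IsCFPeriod t (xiMinus (m, n, k)) → IsCFPeriod t' (xiMinus (m', n', k')) →
      List.IsRotated t t') := by
  obtain ⟨a, b, c, d, hdet, hq⟩ := hequiv
  have hm : m ≠ 0 := by
    rintro rfl
    exact hsq ⟨k, by simp [formDisc, sq]⟩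
  have hm' : m' ≠ 0 := by
    rintro rfl
    exact hsq ⟨k', by rw [hdisc]; simp [formDisc, sq]⟩
  have q1 := hq 1 0
  have q2 := hq 0 1
  have q3 := hq 1 1
  simp only [qval] at q1 q2 q3
  have e1 : m' = m * a ^ 2 + n * c ^ 2 + k * a * c := by linear_combination q1
  have e3 : k' = 2 * m * a * b + 2 * n * c * d + k * (a * d + b * c) := by
    linear_combination q3 - q1 - q2
  have hirr : Irrational (Real.sqrt ((formDisc (m, n, k) : ℤ) : ℝ)) :=
    irrational_sqrt_intCast_iff.2 ⟨hsq, hpos.le⟩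
  have hr2 : (Real.sqrt ((formDisc (m, n, k) : ℤ) : ℝ)) ^ 2 = (k : ℝ) ^ 2 - 4 * m * n := by
    rw [Real.sq_sqrt (by exact_mod_cast hpos.le)]
    simp [formDisc]
  constructor
  · intro s s' hs hs'
    refine TailEq.isRotated ?_ hs hs'
    have := root_tailEq m n k m' n' k' a b c d _ hirr hr2 hm hm' hdet e1 e3
    simp only [xiPlus, ← hdisc]
    exact this
  · intro s s' hs hs'
    refine TailEq.isRotated ?_ hs hs'
    have := root_tailEq m n k m' n' k' a b c d _ hirr.neg (by rw [neg_sq]; exact hr2)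
      hm hm' hdet e1 e3
    simp only [xiMinus, ← hdisc, sub_eq_add_neg]
    exact this
end

section
/- Let s=[a_1,…,a_P] be any period, i.e., a finite sequence of positive integers that is not the concatenation of several copies of a shorter block. Then: (1) there exists a primitive integer binary quadratic form f with positive nonsquare discriminant such that Γ(f)=s; (2) if f and g are two primitive integer forms with positive nonsquare discriminants such that Γ(f) and Γ(g) are equal up to cyclic permutation, then g is SL(2,ℤ)-equivalent either to f or to the antipodal form of f. -/
/-- A period: a nonempty finite sequence of positive integers which is not the
concatenation of several copies of a shorter block. -/
def IsPeriodWord (s : List ℤ) : Prop :=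
  s ≠ [] ∧ (∀ a ∈ s, 0 < a) ∧
  ∀ (t : List ℤ) (j : ℕ), 2 ≤ j → s ≠ (List.replicate j t).flatten

/-- `ξ` is the irrational root of `f` at which the derivative is positive. -/
def PosRoot (f : ℤ × ℤ × ℤ) (ξ : ℝ) : Prop :=
  Irrational ξ ∧ (f.1 : ℝ) * ξ ^ 2 + f.2.2 * ξ + f.2.1 = 0 ∧ 0 < 2 * (f.1 : ℝ) * ξ + f.2.2

/-- `x` and `y` are related by an integral Moebius map of determinant `e`. -/
def MobRel (e : ℤ) (x y : ℝ) : Prop :=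
  ∃ a b c d : ℤ, a * d - b * c = e ∧ y * (c * x + d) = a * x + b

lemma MobRel.symm {e : ℤ} {x y : ℝ} (h : MobRel e x y) : MobRel e y x := by
  obtain ⟨a, b, c, d, h1, h2⟩ := h
  refine ⟨d, -b, -c, a, by linarith, ?_⟩
  push_cast
  linear_combination -h2

lemma MobRel.trans {e e' : ℤ} {x y z : ℝ} (h : MobRel e x y) (h' : MobRel e' y z) :
    MobRel (e * e') x z := by
  obtain ⟨a, b, c, d, h1, h2⟩ := h
  obtain ⟨a', b', c', d', h1', h2'⟩ := h'
  refine ⟨a' * a + b' * c, a' * b + b' * d, c' * a + d' * c, c' * b + d' * d, ?_, ?_⟩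
  · rw [← h1, ← h1']; ring
  · push_cast
    linear_combination (c * x + d) * h2' + (a' - z * c') * h2

lemma irr_lin {ξ : ℝ} (h : Irrational ξ) (a b : ℤ) (h0 : (a : ℝ) * ξ + b = 0) :
    a = 0 ∧ b = 0 := by
  have ha : a = 0 := by
    by_contra ha
    apply h
    refine ⟨-b / a, ?_⟩
    have : (a : ℝ) ≠ 0 := by exact_mod_cast ha
    push_cast
    field_simp
    linarith
  subst ha
  simpa using h0

lemma prim_dvd {f : ℤ × ℤ × ℤ} (hf : IsPrimitiveForm f) {e : ℤ} {x : ℤ}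
    (h1 : e ∣ x * f.1) (h2 : e ∣ x * f.2.1) (h3 : e ∣ x * f.2.2) : e ∣ x := by
  have key : e ∣ x * (Int.gcd f.1 (Int.gcd f.2.1 f.2.2) : ℤ) := by
    rw [Int.gcd_eq_gcd_ab f.1, Int.gcd_eq_gcd_ab f.2.1]
    have : ∀ u v w : ℤ, x * (f.1 * u + (f.2.1 * v + f.2.2 * w) * (Int.gcdB f.1 (f.2.1 * v + f.2.2 * w))) =
      (x * f.1) * u + (x * f.2.1) * (v * (Int.gcdB f.1 (f.2.1 * v + f.2.2 * w))) +
      (x * f.2.2) * (w * (Int.gcdB f.1 (f.2.1 * v + f.2.2 * w))) := by intros; ring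
    rw [this]
    exact dvd_add (dvd_add (h1.mul_right _) (h2.mul_right _)) (h3.mul_right _)
  rw [hf] at key
  simpa using key

lemma prim_of_dvd {f : ℤ × ℤ × ℤ} (h : ∀ e : ℤ, e ∣ f.1 → e ∣ f.2.1 → e ∣ f.2.2 → e ∣ 1) :
    IsPrimitiveForm f := by
  unfold IsPrimitiveForm
  have := h (Int.gcd f.1 (Int.gcd f.2.1 f.2.2)) (Int.gcd_dvd_left _ _)
    ((Int.gcd_dvd_right f.1 _).trans (Int.gcd_dvd_left _ _))
    ((Int.gcd_dvd_right f.1 _).trans (Int.gcd_dvd_right _ _))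
  exact Nat.dvd_one.mp (by exact_mod_cast this)

lemma eq_of_posRoot {f h : ℤ × ℤ × ℤ} {ξ : ℝ} (pf : IsPrimitiveForm f) (ph : IsPrimitiveForm h)
    (hf : PosRoot f ξ) (hh : PosRoot h ξ) : f = h := by
  obtain ⟨m, n, k⟩ := f
  obtain ⟨m', n', k'⟩ := h
  obtain ⟨irr, f1, f2⟩ := hf
  obtain ⟨-, h1, h2⟩ := hh
  simp only at f1 f2 h1 h2
  obtain ⟨e1, e2⟩ := irr_lin irr (k' * m - k * m') (n' * m - n * m') (by
    push_cast; linear_combination m * h1 - m' * f1)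
  have d1 : m ∣ m' := prim_dvd pf (x := m') (by simp) ⟨n', by simp only; linarith⟩
    ⟨k', by simp only; linarith⟩
  have d2 : m' ∣ m := prim_dvd ph (x := m) (by simp) ⟨n, by simp only; linarith⟩
    ⟨k, by simp only; linarith⟩
  have hm0 : m ≠ 0 := by
    rintro rfl
    obtain ⟨e3, e4⟩ := irr_lin irr k n (by simpa using f1)
    subst e3
    simp at f2
  have hs : m' = m ∨ m' = -m := by
    have := Int.natAbs_dvd_natAbs.mpr d1
    have := Int.natAbs_dvd_natAbs.mpr d2
    have := Nat.dvd_antisymm ‹m.natAbs ∣ m'.natAbs› this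
    omega
  rcases hs with rfl | rfl
  · have a1 : k' = k := by
      apply mul_right_cancel₀ hm0; linarith
    have a2 : n' = n := by
      apply mul_right_cancel₀ hm0; linarith
    rw [a1, a2]
  · exfalso
    have a1 : k' = -k := by
      apply mul_right_cancel₀ hm0; linarith
    subst a1
    push_cast at h2
    linarith

lemma slEquiv_of_rel {f g : ℤ × ℤ × ℤ} {ξ η : ℝ} (pf : IsPrimitiveForm f) (pg : IsPrimitiveForm g)
    (hf : PosRoot f ξ) (hg : PosRoot g η) (hr : MobRel 1 ξ η) : SLEquiv g f := by
  obtain ⟨a, b, c, d, hd, hr⟩ := hr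
  refine ⟨a, b, c, d, hd, ?_⟩
  obtain ⟨m, n, k⟩ := g
  obtain ⟨-, g1, g2⟩ := hg
  simp only at g1 g2
  have hdR : (a : ℝ) * d - b * c = 1 := by exact_mod_cast hd
  have : f = (m * a ^ 2 + n * c ^ 2 + k * a * c, m * b ^ 2 + n * d ^ 2 + k * b * d,
      2 * m * a * b + 2 * n * c * d + k * (a * d + b * c)) := by
    apply eq_of_posRoot pf _ hf
    · refine ⟨hf.1, ?_, ?_⟩
      · push_cast
        have hb : (b : ℝ) = η * (c * ξ + d) - a * ξ := by linarith
        have hn : (n : ℝ) = -(m * η ^ 2 + k * η) := by linarith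
        rw [hb, hn]; ring
      · have : (2 * m * η + k : ℝ) = 2 * ((m * a ^ 2 + n * c ^ 2 + k * a * c : ℤ) : ℝ) * ξ +
          ((2 * m * a * b + 2 * n * c * d + k * (a * d + b * c) : ℤ) : ℝ) := by
          push_cast
          have h3 : (c * ξ + d) * (a - η * c) = 1 := by
            linear_combination hdR - c * hr
          have hb : (b : ℝ) = η * (c * ξ + d) - a * ξ := by linarith
          have hn : (n : ℝ) = -(m * η ^ 2 + k * η) := by linarith
          rw [hb, hn]
          linear_combination (-(2 * m * η + k)) * h3
        simp only
        rw [← this]; exact g2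
    · apply prim_of_dvd
      simp only
      intro e e1 e2 e3
      apply prim_dvd pg (x := 1)
      · have : (1 : ℤ) * m = (m * a ^ 2 + n * c ^ 2 + k * a * c) * d ^ 2
          + (m * b ^ 2 + n * d ^ 2 + k * b * d) * c ^ 2
          + (2 * m * a * b + 2 * n * c * d + k * (a * d + b * c)) * (- (c * d)) := by
          have : (1 : ℤ) * m = (a * d - b * c) ^ 2 * m := by rw [hd]; ring
          rw [this]; ring
        simp only
        rw [this]
        exact dvd_add (dvd_add (e1.mul_right _) (e2.mul_right _)) (e3.mul_right _)
      · have : (1 : ℤ) * n = (m * a ^ 2 + n * c ^ 2 + k * a * c) * b ^ 2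
          + (m * b ^ 2 + n * d ^ 2 + k * b * d) * a ^ 2
          + (2 * m * a * b + 2 * n * c * d + k * (a * d + b * c)) * (- (a * b)) := by
          have : (1 : ℤ) * n = (a * d - b * c) ^ 2 * n := by rw [hd]; ring
          rw [this]; ring
        simp only
        rw [this]
        exact dvd_add (dvd_add (e1.mul_right _) (e2.mul_right _)) (e3.mul_right _)
      · have : (1 : ℤ) * k = (m * a ^ 2 + n * c ^ 2 + k * a * c) * (-2 * b * d)
          + (m * b ^ 2 + n * d ^ 2 + k * b * d) * (-2 * a * c)
          + (2 * m * a * b + 2 * n * c * d + k * (a * d + b * c)) * (a * d + b * c) := by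
          have : (1 : ℤ) * k = (a * d - b * c) ^ 2 * k := by rw [hd]; ring
          rw [this]; ring
        simp only
        rw [this]
        exact dvd_add (dvd_add (e1.mul_right _) (e2.mul_right _)) (e3.mul_right _)
  intro x y
  rw [this]
  simp only [qval]
  ring

lemma posRoot_antip {f : ℤ × ℤ × ℤ} {ξ : ℝ} (hf : PosRoot f ξ) : PosRoot (antipF f) (ξ⁻¹) := by
  obtain ⟨m, n, k⟩ := f
  obtain ⟨irr, h1, h2⟩ := hf
  simp only at h1 h2
  have h0 : ξ ≠ 0 := irr.ne_zero
  refine ⟨irr.inv, ?_, ?_⟩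
  · simp only [antipF]
    push_cast
    field_simp
    linarith
  · simp only [antipF]
    push_cast
    have : 2 * -(n : ℝ) * ξ⁻¹ + -k = 2 * m * ξ + k := by
      field_simp
      linarith
    rw [this]; exact h2

lemma prim_antip {f : ℤ × ℤ × ℤ} (hf : IsPrimitiveForm f) : IsPrimitiveForm (antipF f) := by
  apply prim_of_dvd
  simp only [antipF, dvd_neg]
  intro e e1 e2 e3
  exact prim_dvd hf (e2.mul_left _) (e1.mul_left _) (e3.mul_left _)

lemma nonsq_irr {D : ℤ} (h0 : 0 < D) (h : ¬ IsSquare D) : Irrational (Real.sqrt (D : ℝ)) := by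
  rw [irrational_sqrt_intCast_iff]
  exact ⟨h, h0.le⟩

lemma posRoot_xiPlus {f : ℤ × ℤ × ℤ} (h0 : 0 < formDisc f) (h : ¬ IsSquare (formDisc f)) :
    PosRoot f (xiPlus f) := by
  have irr := nonsq_irr h0 h
  obtain ⟨m, n, k⟩ := f
  have hm : m ≠ 0 := by
    rintro rfl
    exact h ⟨k, by simp [formDisc]; ring⟩
  have hmR : (m : ℝ) ≠ 0 := by exact_mod_cast hm
  have hD : (0 : ℝ) < ((formDisc (m, n, k) : ℤ) : ℝ) := by exact_mod_cast h0
  have hs := Real.sq_sqrt hD.le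
  have hp := Real.sqrt_pos.mpr hD
  have hx : 2 * (m : ℝ) * xiPlus (m, n, k) + k = Real.sqrt ((formDisc (m, n, k) : ℤ) : ℝ) := by
    unfold xiPlus
    simp only
    field_simp
    ring
  refine ⟨?_, ?_, ?_⟩
  · rintro ⟨q, hq⟩
    apply irr
    refine ⟨2 * m * q + k, ?_⟩
    push_cast
    rw [hq, hx]
  · rw [← hx] at hs
    simp only [formDisc] at hs
    push_cast at hs
    simp only
    have : (4 * (m : ℝ)) * ((m : ℝ) * xiPlus (m, n, k) ^ 2 + k * xiPlus (m, n, k) + n) = 0 := by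
      linear_combination hs
    rcases mul_eq_zero.mp this with h | h
    · exact absurd h (by simpa using hm)
    · exact h
  · simp only
    rw [hx]; exact hp

lemma of_posRoot {f : ℤ × ℤ × ℤ} {ξ : ℝ} (hf : PosRoot f ξ) :
    0 < formDisc f ∧ ¬ IsSquare (formDisc f) ∧ xiPlus f = ξ := by
  obtain ⟨m, n, k⟩ := f
  obtain ⟨irr, f1, f2⟩ := hf
  simp only at f1 f2
  have hm0 : m ≠ 0 := by
    rintro rfl
    obtain ⟨e3, e4⟩ := irr_lin irr k n (by simpa using f1)
    subst e3
    simp at f2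
  have hmR : (m : ℝ) ≠ 0 := by exact_mod_cast hm0
  have hD : ((formDisc (m, n, k) : ℤ) : ℝ) = (2 * m * ξ + k) ^ 2 := by
    simp only [formDisc]; push_cast
    linear_combination (-4 * m) * f1
  have hsq : Real.sqrt ((formDisc (m, n, k) : ℤ) : ℝ) = 2 * m * ξ + k := by
    rw [hD, Real.sqrt_sq f2.le]
  refine ⟨?_, ?_, ?_⟩
  · have : (0 : ℝ) < ((formDisc (m, n, k) : ℤ) : ℝ) := by rw [hD]; positivity
    exact_mod_cast this
  · rintro ⟨r, hr⟩
    rw [hr] at hsq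
    push_cast at hsq
    rw [Real.sqrt_mul_self_eq_abs, ← Int.cast_abs] at hsq
    obtain ⟨e, -⟩ := irr_lin irr (2 * m) (k - |r|) (by push_cast at hsq ⊢; linarith)
    omega
  · unfold xiPlus
    rw [hsq]
    simp only
    field_simp
    ring

/-! Continued fractions. -/

lemma gaussIter_add (ξ : ℝ) (m n : ℕ) : gaussIter ξ (m + n) = gaussIter (gaussIter ξ m) n := by
  induction n with
  | zero => rfl
  | succ n ih => rw [← add_assoc]; simp only [gaussIter, ih]

lemma gaussIter_irr {ξ : ℝ} (h : Irrational ξ) (n : ℕ) : Irrational (gaussIter ξ n) := by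
  induction n with
  | zero => exact h
  | succ n ih =>
    simp only [gaussIter, one_div]
    exact (ih.sub_intCast _).inv

lemma gaussIter_rel {ξ : ℝ} (h : Irrational ξ) (n : ℕ) :
    ∃ e : ℤ, (e = 1 ∨ e = -1) ∧ MobRel e ξ (gaussIter ξ n) := by
  induction n with
  | zero => exact ⟨1, Or.inl rfl, 1, 0, 0, 1, by norm_num, by simp [gaussIter]⟩
  | succ n ih =>
    obtain ⟨e, he, hr⟩ := ih
    refine ⟨e * -1, by omega, hr.trans ?_⟩
    refine ⟨0, 1, 1, -⌊gaussIter ξ n⌋, by norm_num, ?_⟩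
    have := ((gaussIter_irr h n).sub_intCast ⌊gaussIter ξ n⌋).ne_zero
    simp only [gaussIter]
    push_cast
    field_simp
    ring

lemma gauss_step {x : ℝ} (h : Irrational x) :
    1 < gaussIter x 1 ∧ x = cfTerm x 0 + 1 / gaussIter x 1 := by
  have h0 := (h.sub_intCast ⌊x⌋).ne_zero
  have h1 : x - ⌊x⌋ < 1 := by linarith [Int.lt_floor_add_one x]
  have h2 : 0 < x - ⌊x⌋ := lt_of_le_of_ne (by linarith [Int.floor_le x]) h0.symm
  constructor
  · simp only [gaussIter]
    exact (one_lt_div h2).mpr h1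
  · simp [gaussIter, cfTerm]

lemma cf_close (k : ℕ) : ∀ x y : ℝ, Irrational x → Irrational y →
    (∀ j, cfTerm x j = cfTerm y j) → |x - y| ≤ (1 / 4 : ℝ) ^ k := by
  induction k with
  | zero =>
    intro x y hx hy h
    have := h 0
    simp only [cfTerm, gaussIter] at this
    simpa using (Int.abs_sub_lt_one_of_floor_eq_floor this).le
  | succ k ih =>
    intro x y hx hy h
    obtain ⟨a1, a2⟩ := gauss_step hx
    obtain ⟨b1, b2⟩ := gauss_step hy
    obtain ⟨c1, c2⟩ := gauss_step (gaussIter_irr hx 1)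
    obtain ⟨d1, d2⟩ := gauss_step (gaussIter_irr hy 1)
    rw [← gaussIter_add] at c1 c2 d1 d2
    have e0 := h 0
    have e1 : cfTerm (gaussIter x 1) 0 = cfTerm (gaussIter y 1) 0 := h 1
    have ihh := ih (gaussIter x 2) (gaussIter y 2) (gaussIter_irr hx 2) (gaussIter_irr hy 2)
      (fun j => by
        have := h (2 + j)
        simpa only [cfTerm, gaussIter_add] using this)
    have p1 : (1 : ℝ) ≤ cfTerm (gaussIter x 1) 0 := by
      have : 1 ≤ cfTerm (gaussIter x 1) 0 := by
        simp only [cfTerm, gaussIter]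
        rw [Int.le_floor]
        push_cast
        exact a1.le
      exact_mod_cast this
    rw [← e0] at b2
    rw [← e1] at d2
    norm_num only at c1 c2 d1 d2
    generalize gaussIter x 2 = x2 at *
    generalize gaussIter y 2 = y2 at *
    generalize gaussIter x 1 = x1 at *
    generalize gaussIter y 1 = y1 at *
    generalize ((cfTerm x1 0 : ℤ) : ℝ) = A at *
    generalize ((cfTerm x 0 : ℤ) : ℝ) = B at *
    have q1 : x1 * x2 = A * x2 + 1 := by rw [c2]; field_simp
    have q2 : y1 * y2 = A * y2 + 1 := by rw [d2]; field_simp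
    have r1 : 2 ≤ x1 * x2 := by rw [q1]; nlinarith
    have r2 : 2 ≤ y1 * y2 := by rw [q2]; nlinarith
    have key : x - y = (x2 - y2) / ((x1 * x2) * (y1 * y2)) := by
      have : x - y = (y1 - x1) / (x1 * y1) := by rw [a2, b2]; field_simp; ring
      rw [this]
      have : y1 - x1 = (x2 - y2) / (x2 * y2) := by rw [c2, d2]; field_simp; ring
      rw [this]
      field_simp
    have r3 : 4 ≤ (x1 * x2) * (y1 * y2) := by nlinarith
    rw [key, abs_div, abs_of_pos (by linarith : 0 < (x1 * x2) * (y1 * y2)), pow_succ,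
      div_le_iff₀ (by linarith)]
    have : 0 ≤ (1 / 4 : ℝ) ^ k := by positivity
    nlinarith

lemma cf_unique {x y : ℝ} (hx : Irrational x) (hy : Irrational y)
    (h : ∀ j, cfTerm x j = cfTerm y j) : x = y := by
  by_contra hne
  have hpos : 0 < |x - y| := abs_pos.mpr (sub_ne_zero.mpr hne)
  obtain ⟨n, hn⟩ := exists_pow_lt_of_lt_one hpos (by norm_num : (1 / 4 : ℝ) < 1)
  exact absurd (cf_close n x y hx hy h) (not_le.mpr hn)

lemma uniq_part (f g : ℤ × ℤ × ℤ) (pf : IsPrimitiveForm f) (pg : IsPrimitiveForm g)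
    (f1 : 0 < formDisc f) (f2 : ¬ IsSquare (formDisc f))
    (g1 : 0 < formDisc g) (g2 : ¬ IsSquare (formDisc g))
    (sf sg : List ℤ) (cf : IsCFPeriod sf (xiPlus f)) (cg : IsCFPeriod sg (xiPlus g))
    (hrot : List.IsRotated sf sg) : SLEquiv g f ∨ SLEquiv g (antipF f) := by
  have rf := posRoot_xiPlus f1 f2
  have rg := posRoot_xiPlus g1 g2
  generalize xiPlus f = ξ at *
  generalize xiPlus g = η at *
  obtain ⟨r, rfl⟩ := hrot
  obtain ⟨sne, ⟨N, hN⟩, -⟩ := cf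
  obtain ⟨-, ⟨M, hM⟩, -⟩ := cg
  have hlen : 0 < sf.length := List.length_pos_iff.mpr sne
  have heq : gaussIter ξ (N + r) = gaussIter η M := by
    apply cf_unique (gaussIter_irr rf.1 _) (gaussIter_irr rg.1 _)
    intro j
    have h1 : cfTerm (gaussIter ξ (N + r)) j = cfTerm ξ (N + (r + j)) := by
      simp only [cfTerm]; rw [← add_assoc, gaussIter_add ξ (N + r)]
    have h2 : cfTerm (gaussIter η M) j = cfTerm η (M + j) := by
      simp only [cfTerm]; rw [gaussIter_add]
    rw [h1, h2, hN, hM, List.length_rotate, List.getD_eq_getElem?_getD,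
      List.getD_eq_getElem?_getD, List.getElem?_rotate (Nat.mod_lt _ hlen)]
    congr 2
    rw [Nat.mod_add_mod, add_comm]
  obtain ⟨e, he, h1⟩ := gaussIter_rel rf.1 (N + r)
  obtain ⟨e', he', h2⟩ := gaussIter_rel rg.1 M
  rw [heq] at h1
  have h3 := h1.trans h2.symm
  have h4 : e * e' = 1 ∨ e * e' = -1 := by
    rcases he with rfl | rfl <;> rcases he' with rfl | rfl <;> simp
  rcases h4 with h4 | h4
  · left
    rw [h4] at h3
    exact slEquiv_of_rel pf pg rf rg h3
  · right
    rw [h4] at h3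
    have h5 : MobRel (-1) (ξ⁻¹) ξ := by
      have := rf.1.ne_zero
      refine ⟨0, 1, 1, 0, by norm_num, ?_⟩
      push_cast
      field_simp
      ring
    have h6 := h5.trans h3
    norm_num only at h6
    exact slEquiv_of_rel (prim_antip pf) pg (posRoot_antip rf) rg h6

/-! Existence. -/

/-- `a₁ + 1/(a₂ + 1/(⋯ + 1/x))`. -/
noncomputable def cfFold : List ℤ → ℝ → ℝ
  | [], x => x
  | a :: s, x => a + 1 / cfFold s x

lemma cfFold_pos (s : List ℤ) (hs : ∀ a ∈ s, 0 < a) {x : ℝ} (hx : 0 < x) : 0 < cfFold s x := by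
  induction s with
  | nil => exact hx
  | cons a s ih =>
    have h1 := ih (fun b hb => hs b (List.mem_cons_of_mem _ hb))
    have h2 : (0 : ℝ) < a := by exact_mod_cast hs a List.mem_cons_self
    simp only [cfFold]
    positivity

lemma cfFold_gt_one (s : List ℤ) (hs : ∀ a ∈ s, 0 < a) {x : ℝ} (hx : 0 < x) (hne : s ≠ []) :
    1 < cfFold s x := by
  cases s with
  | nil => exact absurd rfl hne
  | cons a s =>
    have h1 := cfFold_pos s (fun b hb => hs b (List.mem_cons_of_mem _ hb)) hx
    have h2 : (1 : ℝ) ≤ a := by exact_mod_cast hs a List.mem_cons_self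
    simp only [cfFold]
    have : 0 < 1 / cfFold s x := by positivity
    linarith

lemma cfFold_mat (s : List ℤ) (hs : ∀ a ∈ s, 0 < a) :
    ∃ p q r t : ℤ, 0 < p ∧ 0 ≤ q ∧ 0 ≤ r ∧ 0 ≤ t ∧ 0 < q + t ∧ (s ≠ [] → 0 < q ∧ 0 < r) ∧
      ∀ x : ℝ, 0 < x → cfFold s x * (r * x + t) = p * x + q := by
  induction s with
  | nil => exact ⟨1, 0, 0, 1, by norm_num, le_rfl, le_rfl, by norm_num, by norm_num,
      fun h => absurd rfl h, fun x hx => by simp [cfFold]⟩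
  | cons a s ih =>
    have hs' : ∀ b ∈ s, 0 < b := fun b hb => hs b (List.mem_cons_of_mem _ hb)
    obtain ⟨p, q, r, t, hp, hq, hr, ht, hqt, -, h⟩ := ih hs'
    have ha : 0 < a := hs a List.mem_cons_self
    have hc : 0 < a * q + t := by nlinarith
    refine ⟨a * p + r, a * q + t, p, q, by positivity, hc.le, hp.le, hq, by linarith,
      fun _ => ⟨hc, hp⟩, fun x hx => ?_⟩
    have h1 := h x hx
    have h2 := cfFold_pos s hs' hx
    simp only [cfFold]
    push_cast
    rw [← h1]
    field_simp
    linear_combination (a : ℝ) * h1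

lemma rat_terminates (v : ℕ) : 0 < v → ∀ (u : ℤ) (ξ : ℝ), ξ = u / v →
    ∃ n, gaussIter ξ n = ⌊gaussIter ξ n⌋ := by
  induction v using Nat.strong_induction_on with
  | _ v ih =>
    intro hv u ξ hξ
    have hvR : (0 : ℝ) < v := by exact_mod_cast hv
    have hfl : ⌊ξ⌋ = u / v := by
      rw [hξ]
      have : ((u : ℝ) / (v : ℝ)) = (((u / v : ℚ)) : ℝ) := by push_cast; rfl
      rw [this, Rat.floor_cast, Rat.floor_intCast_div_natCast]
    have hfr : ξ - ⌊ξ⌋ = ((u % v : ℤ) : ℝ) / v := by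
      rw [hfl, hξ, Int.emod_def]
      push_cast
      field_simp
    have h0 : 0 ≤ u % v := Int.emod_nonneg _ (by omega)
    have h1 : u % v < v := Int.emod_lt_of_pos _ (by omega)
    by_cases hz : u % v = 0
    · refine ⟨0, ?_⟩
      rw [hz] at hfr
      simp only [gaussIter]
      rw [Int.cast_zero, zero_div] at hfr
      linarith
    · obtain ⟨n, hn⟩ := ih (u % v).toNat (by omega) (by omega) v (gaussIter ξ 1) (by
        simp only [gaussIter]
        rw [hfr]
        have : (((u % v).toNat : ℕ) : ℝ) = ((u % v : ℤ) : ℝ) := by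
          have : (((u % v).toNat : ℕ) : ℤ) = (u % v : ℤ) := Int.toNat_of_nonneg h0
          exact_mod_cast this
        rw [this]
        simp)
      refine ⟨1 + n, ?_⟩
      rw [gaussIter_add]; exact hn

lemma flatten_range (a : ℕ → ℤ) (d : ℕ) (h : ∀ j, a (j + d) = a j) (k : ℕ) :
    (List.range (k * d)).map a = (List.replicate k ((List.range d).map a)).flatten := by
  have hk : ∀ k j, a (k * d + j) = a j := by
    intro k j
    induction k with
    | zero => simp
    | succ k ih => rw [← ih, ← h (k * d + j)]; congr 1; ring
  induction k with
  | zero => simp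
  | succ k ih =>
    rw [Nat.succ_mul, List.range_add, List.map_append, ih, List.replicate_succ',
      List.flatten_append]
    simp [Function.comp_def, hk]

lemma period_min (s : List ℤ) (hs : IsPeriodWord s) (Q N : ℕ) (hQ : 1 ≤ Q)
    (h : ∀ j, s.getD ((N + j + Q) % s.length) 0 = s.getD ((N + j) % s.length) 0) :
    s.length ≤ Q := by
  obtain ⟨hne, -, hmin⟩ := hs
  have hP : 0 < s.length := List.length_pos_iff.mpr hne
  obtain ⟨a, ha⟩ : ∃ a : ℕ → ℤ, a = fun j => s.getD (j % s.length) 0 := ⟨_, rfl⟩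
  have hmod : ∀ i j, i % s.length = j % s.length → a i = a j := by
    intro i j hij; simp only [ha, hij]
  have hper : ∀ j, a (j + Q) = a j := by
    intro j
    obtain ⟨i, hi⟩ : ∃ i, N + i = j + N * s.length :=
      ⟨j + N * s.length - N, by have : N ≤ N * s.length := Nat.le_mul_of_pos_right _ hP
                                omega⟩
    have h1 : a (N + i + Q) = a (N + i) := by simp only [ha]; exact h i
    rw [hi] at h1
    rw [hmod (j + Q) (j + N * s.length + Q) (by
      rw [show j + N * s.length + Q = j + Q + N * s.length by ring]; simp), h1]
    exact hmod _ _ (by simp)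
  have hperk : ∀ k j, a (j + Q * k) = a j := by
    intro k j
    induction k with
    | zero => simp
    | succ k ih => rw [← ih, ← hper (j + Q * k)]; congr 1; ring
  have hd : ∀ j, a (j + Nat.gcd Q s.length) = a j := by
    intro j
    obtain ⟨x, hx⟩ : ∃ x, Q * x % s.length = Nat.gcd Q s.length % s.length := by
      have hb := Nat.gcd_eq_gcd_ab Q s.length
      have hPz : (0 : ℤ) < s.length := by exact_mod_cast hP
      refine ⟨(Nat.gcdA Q s.length % s.length).toNat, ?_⟩
      have h1 : (((Nat.gcdA Q s.length % s.length).toNat : ℕ) : ℤ) =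
        Nat.gcdA Q s.length % s.length := Int.toNat_of_nonneg (Int.emod_nonneg _ hPz.ne')
      zify
      rw [h1, hb, Int.add_mul_emod_self_left, Int.mul_emod, Int.emod_emod, ← Int.mul_emod]
    rw [← hperk x j]
    exact hmod _ _ (by rw [Nat.add_mod, ← hx, ← Nat.add_mod])
  obtain ⟨k, hk⟩ := Nat.gcd_dvd_right Q s.length
  have hs' : s = (List.range (k * Nat.gcd Q s.length)).map a := by
    rw [mul_comm, ← hk]
    apply List.ext_getElem
    · simp
    · intro i h1 h2
      simp [ha, Nat.mod_eq_of_lt h1, h1]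
  rw [flatten_range a _ hd k] at hs'
  have hk2 : ¬ 2 ≤ k := fun h2 => hmin _ k h2 hs'
  have hk1 : k = 1 := by
    have : k ≠ 0 := by rintro rfl; omega
    omega
  rw [hk1, mul_one] at hk
  rw [hk]
  exact Nat.le_of_dvd (by omega) (Nat.gcd_dvd_left _ _)

lemma exists_fixed (s : List ℤ) (hne : s ≠ []) (hs : ∀ a ∈ s, 0 < a) :
    ∃ (ξ : ℝ) (r u q : ℤ), 0 < ξ ∧ cfFold s ξ = ξ ∧ 0 < r ∧
      (r : ℝ) * ξ ^ 2 + u * ξ + q = 0 ∧ 0 < 2 * (r : ℝ) * ξ + u := by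
  obtain ⟨p, q, r, t, hp, hq, hr, ht, hqt, h2, h⟩ := cfFold_mat s hs
  obtain ⟨hq, hr⟩ := h2 hne
  have hrR : (0 : ℝ) < r := by exact_mod_cast hr
  have hqR : (0 : ℝ) < q := by exact_mod_cast hq
  have htR : (0 : ℝ) ≤ t := by exact_mod_cast ht
  obtain ⟨D, hD⟩ : ∃ D : ℝ, D = ((p : ℝ) - t) ^ 2 + 4 * q * r := ⟨_, rfl⟩
  have hDpos : |(p : ℝ) - t| ^ 2 < D := by rw [hD, sq_abs]; linarith [mul_pos hqR hrR]
  have hD0 : 0 < D := lt_of_le_of_lt (by positivity) hDpos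
  have hsq := Real.sq_sqrt hD0.le
  have hlt : |(p : ℝ) - t| < Real.sqrt D := Real.lt_sqrt_of_sq_lt hDpos
  have hsp := Real.sqrt_pos.mpr hD0
  generalize Real.sqrt D = w at *
  obtain ⟨ξ, hξ⟩ : ∃ ξ : ℝ, ξ = ((p - t) + w) / (2 * r) := ⟨_, rfl⟩
  have hw : w = 2 * r * ξ - (p - t) := by rw [hξ]; field_simp; ring
  have hξ0 : 0 < ξ := by
    rw [hξ]; apply div_pos _ (by positivity)
    linarith [neg_abs_le ((p : ℝ) - t)]
  have heq : (r : ℝ) * ξ ^ 2 + (t - p) * ξ - q = 0 := by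
    have : (4 * (r : ℝ)) * ((r : ℝ) * ξ ^ 2 + (t - p) * ξ - q) = 0 := by
      rw [hD, hw] at hsq
      linear_combination hsq
    rcases mul_eq_zero.mp this with h | h
    · linarith
    · exact h
  refine ⟨ξ, r, t - p, -q, hξ0, ?_, hr, ?_, ?_⟩
  · have hc : (r : ℝ) * ξ + t ≠ 0 := by positivity
    apply mul_right_cancel₀ hc
    rw [h ξ hξ0]
    linear_combination -heq
  · push_cast; linear_combination heq
  · push_cast; linarith

lemma exists_part (s : List ℤ) (hs : IsPeriodWord s) :
    ∃ f : ℤ × ℤ × ℤ, IsPrimitiveForm f ∧ 0 < formDisc f ∧ ¬ IsSquare (formDisc f) ∧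
      IsCFPeriod s (xiPlus f) := by
  obtain ⟨hne, hpos, hmin⟩ := hs
  have hP : 0 < s.length := List.length_pos_iff.mpr hne
  obtain ⟨ξ, r, u, q, hξ, hfix, hr, e1, e2⟩ := exists_fixed s hne hpos
  have hξ1 : 1 < ξ := by rw [← hfix]; exact cfFold_gt_one s hpos hξ hne
  have hdrop : ∀ i, 1 < cfFold (s.drop i) ξ := by
    intro i
    by_cases h : s.drop i = []
    · rw [h]; exact hξ1
    · exact cfFold_gt_one _ (fun a ha => hpos a (List.mem_of_mem_drop ha)) hξ h
  have hstep : ∀ i (hi : i < s.length), cfFold (s.drop i) ξ =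
      s[i] + 1 / cfFold (s.drop (i + 1)) ξ := by
    intro i hi
    rw [List.drop_eq_getElem_cons hi]; rfl
  have hfloor : ∀ i (hi : i < s.length), ⌊cfFold (s.drop i) ξ⌋ = s[i] := by
    intro i hi
    have h1 := hdrop (i + 1)
    rw [hstep i hi, Int.floor_eq_iff]
    have h2 : 0 < 1 / cfFold (s.drop (i + 1)) ξ := by positivity
    have h3 : 1 / cfFold (s.drop (i + 1)) ξ < 1 := (div_lt_one (by linarith)).mpr h1
    constructor <;> linarith
  have hiter : ∀ j, gaussIter ξ j = cfFold (s.drop (j % s.length)) ξ := by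
    intro j
    induction j with
    | zero => simp [gaussIter, hfix]
    | succ j ih =>
      have hi := Nat.mod_lt j hP
      have h1 : gaussIter ξ (j + 1) = cfFold (s.drop (j % s.length + 1)) ξ := by
        simp only [gaussIter]
        rw [ih, hfloor _ hi, hstep _ hi]
        simp
      rw [h1]
      by_cases hlast : j % s.length + 1 = s.length
      · have : (j + 1) % s.length = 0 := by
          rw [← Nat.mod_add_mod, hlast, Nat.mod_self]
        rw [this, hlast]
        simp [cfFold, hfix]
      · have : (j + 1) % s.length = j % s.length + 1 := by
          rw [← Nat.mod_add_mod, Nat.mod_eq_of_lt (by omega)]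
        rw [this]
  have hterm : ∀ j, cfTerm ξ j = s.getD (j % s.length) 0 := by
    intro j
    have hi := Nat.mod_lt j hP
    rw [cfTerm, hiter, hfloor _ hi]
    simp [hi]
  have hirr : Irrational ξ := by
    rintro ⟨x, hx⟩
    obtain ⟨n, hn⟩ := rat_terminates x.den x.den_pos x.num ξ (by
      rw [← hx]; exact_mod_cast (Rat.num_div_den x).symm)
    have hi := Nat.mod_lt n hP
    rw [hiter, hfloor _ hi, hstep _ hi] at hn
    have h1 := hdrop (n % s.length + 1)
    have h2 : 0 < 1 / cfFold (s.drop (n % s.length + 1)) ξ := by positivity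
    linarith
  obtain ⟨g, hg⟩ : ∃ g : ℕ, g = Int.gcd r (Int.gcd q u) := ⟨_, rfl⟩
  have hg0 : 0 < g := by
    rw [hg]; exact Int.gcd_pos_of_ne_zero_left _ hr.ne'
  have hgR : (0 : ℝ) < g := by exact_mod_cast hg0
  obtain ⟨r', hr'⟩ : (g : ℤ) ∣ r := by rw [hg]; exact Int.gcd_dvd_left _ _
  obtain ⟨q', hq'⟩ : (g : ℤ) ∣ q := by
    rw [hg]; exact (Int.gcd_dvd_right r _).trans (Int.gcd_dvd_left _ _)
  obtain ⟨u', hu'⟩ : (g : ℤ) ∣ u := by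
    rw [hg]; exact (Int.gcd_dvd_right r _).trans (Int.gcd_dvd_right _ _)
  have hprim : IsPrimitiveForm (r', q', u') := by
    apply prim_of_dvd
    simp only
    intro e d1 d2 d3
    have h1 : (g : ℤ) * e ∣ (Int.gcd r (Int.gcd q u) : ℤ) := by
      apply Int.dvd_coe_gcd
      · rw [hr']; exact mul_dvd_mul_left _ d1
      · apply Int.dvd_coe_gcd
        · rw [hq']; exact mul_dvd_mul_left _ d2
        · rw [hu']; exact mul_dvd_mul_left _ d3
    rw [← hg] at h1
    have h2 : (g : ℤ) * e ∣ g * 1 := by simpa using h1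
    exact (mul_dvd_mul_iff_left (by exact_mod_cast hg0.ne')).mp h2
  have hroot : PosRoot (r', q', u') ξ := by
    rw [hr', hu'] at e2
    rw [hr', hu', hq'] at e1
    push_cast at e1 e2
    refine ⟨hirr, ?_, ?_⟩
    · simp only
      apply mul_left_cancel₀ hgR.ne'
      linear_combination e1
    · simp only
      have : 0 < (g : ℝ) * (2 * r' * ξ + u') := by linarith
      exact (mul_pos_iff_of_pos_left hgR).mp this
  obtain ⟨k1, k2, k3⟩ := of_posRoot hroot
  refine ⟨_, hprim, k1, k2, ?_⟩
  rw [k3]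
  refine ⟨hne, ⟨0, fun j => by rw [zero_add, hterm]⟩, ?_⟩
  rintro Q hQ ⟨N, -, hN⟩
  apply period_min s ⟨hne, hpos, hmin⟩ Q N hQ
  intro j
  rw [← hterm, ← hterm]
  exact hN j

/-- Any period `s` defines a class of forms with `Γ(f) = s`, uniquely up to the
antipodal involution (among primitive classes). -/
theorem statement2 (s : List ℤ) (hs : IsPeriodWord s) :
    (∃ f : ℤ × ℤ × ℤ, IsPrimitiveForm f ∧ 0 < formDisc f ∧ ¬ IsSquare (formDisc f) ∧
      IsCFPeriod s (xiPlus f)) ∧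
    (∀ f g : ℤ × ℤ × ℤ, IsPrimitiveForm f → IsPrimitiveForm g →
      0 < formDisc f → ¬ IsSquare (formDisc f) →
      0 < formDisc g → ¬ IsSquare (formDisc g) →
      ∀ sf sg : List ℤ, IsCFPeriod sf (xiPlus f) → IsCFPeriod sg (xiPlus g) →
        List.IsRotated sf sg → (SLEquiv g f ∨ SLEquiv g (antipF f))) := by
  exact ⟨exists_part s hs, uniq_part⟩
end
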